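/- Let ε_1, …, ε_n be independent Rademacher random variables, let T_n = {x ∈ ℝ^n : x_1 ≥ x_2 ≥ … ≥ x_n ≥ 0}, and for x ∈ ℝ^n define α_j(x) = E[ ε_j sgn( Σ_{i=1}^n x_i ε_i ) ], j = 1,…,n. Then α maps T_n into T_n: for every x ∈ T_n, α_1(x) ≥ α_2(x) ≥ … ≥ α_n(x) ≥ 0. -/

import Mathlib

open Finset

/-- The cone `T_n = {x ∈ ℝ^n : x_1 ≥ x_2 ≥ … ≥ x_n ≥ 0}` of nonincreasing
nonnegative sequences. -/
def Tcone (n : ℕ) : Set (Fin n → ℝ) :=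
  {x | (∀ i j : Fin n, i ≤ j → x j ≤ x i) ∧ ∀ i, 0 ≤ x i}

/-- `α_j(x) = E[ε_j sgn(Σ_i x_i ε_i)]` for independent Rademacher signs
(modelled by the uniform measure on `{-1,1}^n`, encoded via `Fin n → Bool`). -/
noncomputable def alph (n : ℕ) (x : Fin n → ℝ) (j : Fin n) : ℝ :=
  (2 ^ n : ℝ)⁻¹ * ∑ s : Fin n → Bool,
    (if s j then (1 : ℝ) else -1) *
      Real.sign (∑ i, x i * (if s i then (1 : ℝ) else -1))

theorem aux_sign_mono {a b : ℝ} (h : a ≤ b) : Real.sign a ≤ Real.sign b := by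
  rcases lt_trichotomy a 0 with ha | ha | ha <;> rcases lt_trichotomy b 0 with hb | hb | hb <;>
    simp [Real.sign_of_neg, Real.sign_of_pos, ha, hb] <;> linarith

theorem aux_pair {c d S S' : ℝ} (hd : 0 ≤ d) (h : S - S' = d * c) :
    0 ≤ c * Real.sign S + (-c) * Real.sign S' := by
  rcases le_total 0 c with hc | hc
  · have : S' ≤ S := by nlinarith [mul_nonneg hd hc]
    nlinarith [mul_nonneg hc (sub_nonneg.2 (aux_sign_mono this))]
  · have : S ≤ S' := by nlinarith [mul_nonneg hd (neg_nonneg.2 hc)]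
    nlinarith [mul_nonneg (neg_nonneg.2 hc) (sub_nonneg.2 (aux_sign_mono this))]

theorem aux_invol {α : Type*} [Fintype α] (σ : α → α) (hσ : Function.Involutive σ) (F : α → ℝ)
    (h : ∀ s, 0 ≤ F s + F (σ s)) : 0 ≤ ∑ s, F s := by
  have h1 : ∑ s, F (σ s) = ∑ s, F s := Equiv.sum_comp hσ.toPerm F
  have h2 : 0 ≤ ∑ s, (F s + F (σ s)) := Finset.sum_nonneg fun s _ => h s
  rw [Finset.sum_add_distrib, h1] at h2
  linarith

/-- `α` maps `T_n` into `T_n`: for `x ∈ T_n`, `α_1(x) ≥ α_2(x) ≥ … ≥ α_n(x) ≥ 0`. -/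
theorem alph_maps_Tcone_to_Tcone (n : ℕ) (x : Fin n → ℝ) (hx : x ∈ Tcone n) :
    (fun j => alph n x j) ∈ Tcone n := by
  obtain ⟨hm, hp⟩ := hx
  refine ⟨fun i j hij => ?_, fun j => ?_⟩
  · rcases eq_or_ne i j with rfl | hne
    · exact le_rfl
    show alph n x j ≤ alph n x i
    unfold alph
    refine mul_le_mul_of_nonneg_left ?_ (by positivity)
    rw [← sub_nonneg, ← Finset.sum_sub_distrib]
    refine aux_invol (fun s => s ∘ Equiv.swap i j) (fun s => by ext k; simp) _ fun s => ?_
    have key := aux_pair (c := (if s i then (1 : ℝ) else -1) - (if s j then (1 : ℝ) else -1))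
      (S := ∑ k, x k * (if s k then (1 : ℝ) else -1))
      (S' := ∑ k, x k * (if s (Equiv.swap i j k) then (1 : ℝ) else -1))
      (sub_nonneg.2 (hm i j hij)) (by
        rw [← Finset.sum_sub_distrib, Finset.sum_eq_add i j hne]
        · rw [Equiv.swap_apply_left, Equiv.swap_apply_right]; ring
        · intro k _ hk
          rw [Equiv.swap_apply_of_ne_of_ne hk.1 hk.2]; ring
        · simp
        · simp)
    simp only [Function.comp_apply, Equiv.swap_apply_left, Equiv.swap_apply_right]
    refine key.trans_eq ?_
    ring
  · show 0 ≤ alph n x j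
    unfold alph
    refine mul_nonneg (by positivity) ?_
    refine aux_invol (fun s => Function.update s j (!s j)) (fun s => by simp) _ fun s => ?_
    have hb : (if (!s j) = true then (1 : ℝ) else -1) = -(if s j then (1 : ℝ) else -1) := by
      cases s j <;> simp
    have key := aux_pair (c := (if s j then (1 : ℝ) else -1)) (d := 2 * x j)
      (S := ∑ k, x k * (if s k then (1 : ℝ) else -1))
      (S' := ∑ k, x k * (if Function.update s j (!s j) k then (1 : ℝ) else -1))
      (by linarith [hp j]) (by
        rw [← Finset.sum_sub_distrib, Finset.sum_eq_single j]
        · rw [Function.update_self, hb]; ring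
        · intro k _ hk
          rw [Function.update_of_ne hk]; ring
        · simp)
    simp only [Function.update_self, hb]
    exact key
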